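/- arXiv:1701.07786 — 5 statements merged into one kernel-verified Lean document; each statement's English description precedes it below -/
import Mathlib

section
/- Let g be a Lie algebra over a field K of characteristic zero and let R : g → g be a linear map. Define the skew-symmetric bracket [x,y]_R := (1/2)([Rx,y] + [x,Ry]) and the bilinear map B_R(x,y) := R([Rx,y] + [x,Ry]) − [Rx,Ry]. Then [·,·]_R satisfies the Jacobi identity if and only if [B_R(x,y),z] + [B_R(z,x),y] + [B_R(y,z),x] = 0 for all x, y, z in g. -/
/-- The `R`-bracket `[x,y]_R := (1/2)([Rx,y] + [x,Ry])`. -/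
def rBracket {K : Type*} [Field K] {L : Type*} [LieRing L] [LieAlgebra K L]
    (R : L →ₗ[K] L) (x y : L) : L :=
  (1 / 2 : K) • (⁅R x, y⁆ + ⁅x, R y⁆)

/-- `B_R(x,y) := R([Rx,y] + [x,Ry]) − [Rx,Ry]`. -/
def yangBaxterB {K : Type*} [Field K] {L : Type*} [LieRing L] [LieAlgebra K L]
    (R : L →ₗ[K] L) (x y : L) : L :=
  R (⁅R x, y⁆ + ⁅x, R y⁆) - ⁅R x, R y⁆

theorem jac_aux {L : Type*} [LieRing L] (a b c : L) :
    ⁅⁅a, b⁆, c⁆ + ⁅⁅b, c⁆, a⁆ + ⁅⁅c, a⁆, b⁆ = 0 := by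
  have h := lie_jacobi a b c
  rw [← lie_skew ⁅a, b⁆ c, ← lie_skew ⁅b, c⁆ a, ← lie_skew ⁅c, a⁆ b]
  rw [← neg_eq_zero, ← h]
  abel

theorem key_aux {K : Type*} [Field K] [CharZero K]
    {L : Type*} [LieRing L] [LieAlgebra K L] (R : L →ₗ[K] L) (x y z : L) :
    rBracket R (rBracket R x y) z + rBracket R (rBracket R y z) x
        + rBracket R (rBracket R z x) y =
    (1 / 4 : K) • (⁅yangBaxterB R x y, z⁆ + ⁅yangBaxterB R z x, y⁆ + ⁅yangBaxterB R y z, x⁆) := by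
  have e : (1 / 4 : K) = (1 / 2) * (1 / 2) := by norm_num
  have h1 := jac_aux (R x) (R y) z
  have h2 := jac_aux (R y) (R z) x
  have h3 := jac_aux (R z) (R x) y
  simp only [rBracket, yangBaxterB, map_smul, smul_lie, lie_smul, ← smul_add, smul_smul, e]
  congr 1
  simp only [map_add, add_lie, sub_lie]
  rw [← sub_eq_zero, ← add_zero (0 : L)]
  nth_rewrite 1 [← h1]
  rw [← add_zero (0 : L)]
  nth_rewrite 1 [← h2]
  rw [← h3]
  abel

/-- For a Lie algebra `g` over a field of characteristic zero and a linear map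
`R : g → g`, the skew-symmetric bracket `[x,y]_R := (1/2)([Rx,y] + [x,Ry])` satisfies the
Jacobi identity if and only if
`[B_R(x,y),z] + [B_R(z,x),y] + [B_R(y,z),x] = 0` for all `x, y, z`, where
`B_R(x,y) := R([Rx,y] + [x,Ry]) − [Rx,Ry]`. -/
theorem rBracket_jacobi_iff
    (K : Type*) [Field K] [CharZero K]
    (L : Type*) [LieRing L] [LieAlgebra K L]
    (R : L →ₗ[K] L) :
    (∀ x y z : L,
      rBracket R (rBracket R x y) z + rBracket R (rBracket R y z) x
        + rBracket R (rBracket R z x) y = 0) ↔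
    (∀ x y z : L,
      ⁅yangBaxterB R x y, z⁆ + ⁅yangBaxterB R z x, y⁆ + ⁅yangBaxterB R y z, x⁆ = 0) := by
  have h4 : (1 / 4 : K) ≠ 0 := by norm_num
  simp only [key_aux, smul_eq_zero, h4, false_or]
end

section
/- Let g be a Lie algebra over a field K of characteristic zero, let θ ∈ K, and let R : g → g be a linear map satisfying the modified classical Yang–Baxter equation with parameter θ: [Rx,Ry] = R([Rx,y] + [x,Ry]) − θ[x,y] for all x, y in g. Then the skew-symmetric bracket [x,y]_R := (1/2)([Rx,y] + [x,Ry]) satisfies the Jacobi identity, so it defines a Lie algebra structure g_R on the underlying vector space of g. -/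
/-- If `R : g → g` satisfies the modified classical Yang–Baxter equation with
parameter `θ`, `[Rx,Ry] = R([Rx,y] + [x,Ry]) − θ[x,y]`, then the skew-symmetric bracket
`[x,y]_R := (1/2)([Rx,y] + [x,Ry])` satisfies the Jacobi identity, hence defines a Lie algebra
structure `g_R` on the underlying vector space of `g`. -/
theorem mcybe_rBracket_jacobi
    (K : Type*) [Field K] [CharZero K]
    (L : Type*) [LieRing L] [LieAlgebra K L]
    (θ : K) (R : L →ₗ[K] L)
    (hR : ∀ x y : L, ⁅R x, R y⁆ = R (⁅R x, y⁆ + ⁅x, R y⁆) - θ • ⁅x, y⁆) :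
    (∀ x y : L, rBracket R x y = - rBracket R y x) ∧
    (∀ x y z : L,
      rBracket R (rBracket R x y) z + rBracket R (rBracket R y z) x
        + rBracket R (rBracket R z x) y = 0) := by
  have J : ∀ a b c : L, ⁅⁅a, b⁆, c⁆ + ⁅⁅b, c⁆, a⁆ + ⁅⁅c, a⁆, b⁆ = 0 := by
    intro a b c
    have h := lie_jacobi c a b
    rw [← lie_skew c ⁅a, b⁆, ← lie_skew a ⁅b, c⁆, ← lie_skew b ⁅c, a⁆] at h
    have h2 : -(⁅⁅a, b⁆, c⁆ + ⁅⁅b, c⁆, a⁆ + ⁅⁅c, a⁆, b⁆) = 0 := by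
      rw [← h]; abel
    exact neg_eq_zero.mp h2
  constructor
  · intro x y
    unfold rBracket
    rw [← smul_neg, ← lie_skew (R x) y, ← lie_skew x (R y)]
    congr 1
    abel
  · have key : ∀ x y z : L, rBracket R (rBracket R x y) z = (1 / 2 : K) • (1 / 2 : K) •
        (⁅⁅R x, R y⁆, z⁆ + θ • ⁅⁅x, y⁆, z⁆ + ⁅⁅R x, y⁆, R z⁆ + ⁅⁅x, R y⁆, R z⁆) := by
      intro x y z
      have h : R (⁅R x, y⁆ + ⁅x, R y⁆) = ⁅R x, R y⁆ + θ • ⁅x, y⁆ := by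
        rw [hR]; abel
      unfold rBracket
      rw [map_smul, h, smul_lie, smul_lie, ← smul_add, add_lie, add_lie, smul_lie]
      congr 2
      abel
    intro x y z
    rw [key, key, key, ← smul_add, ← smul_add, ← smul_add, ← smul_add]
    have h0 : θ • (⁅⁅x, y⁆, z⁆ + ⁅⁅y, z⁆, x⁆ + ⁅⁅z, x⁆, y⁆) = 0 := by rw [J, smul_zero]
    have h1 := J (R x) (R y) z
    have h2 := J (R x) y (R z)
    have h3 := J x (R y) (R z)
    rw [smul_add, smul_add] at h0
    have h4 := congrArg₂ (· + ·) (congrArg₂ (· + ·) h0 h1) (congrArg₂ (· + ·) h2 h3)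
    simp only [add_zero] at h4
    rw [smul_eq_zero_of_right]
    rw [smul_eq_zero_of_right]
    rw [← h4]
    abel
end

section
/- Let g be a Lie algebra over a field K of characteristic zero and let R : g → g be a linear map satisfying the modified classical Yang–Baxter equation [Rx,Ry] = R([Rx,y] + [x,Ry]) − [x,y] for all x, y in g. Define R_± := (1/2)(R ± id). Then R_+ and R_− are Lie algebra morphisms from g_R to g, where g_R is the underlying vector space of g with bracket [x,y]_R := (1/2)([Rx,y] + [x,Ry]); equivalently, [R_± x, R_± y] = R_±([R_± x, y] + [x, R_± y] ∓ [x,y]) for all x, y in g. -/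
/-- `R_+ := (1/2)(R + id)`. -/
def rPlus {K : Type*} [Field K] {L : Type*} [LieRing L] [LieAlgebra K L]
    (R : L →ₗ[K] L) : L →ₗ[K] L :=
  (1 / 2 : K) • (R + LinearMap.id)

/-- `R_− := (1/2)(R − id)`. -/
def rMinus {K : Type*} [Field K] {L : Type*} [LieRing L] [LieAlgebra K L]
    (R : L →ₗ[K] L) : L →ₗ[K] L :=
  (1 / 2 : K) • (R - LinearMap.id)

/-- If `R` satisfies the modified classical Yang–Baxter equation
`[Rx,Ry] = R([Rx,y] + [x,Ry]) − [x,y]`, then `R_± := (1/2)(R ± id)` are Lie algebra morphisms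
from `g_R` (with bracket `[x,y]_R := (1/2)([Rx,y] + [x,Ry])`) to `g`; equivalently,
`[R_± x, R_± y] = R_±([R_± x, y] + [x, R_± y] ∓ [x,y])` for all `x, y`. -/
theorem mcybe_rPlus_rMinus_lieMorphism
    (K : Type*) [Field K] [CharZero K]
    (L : Type*) [LieRing L] [LieAlgebra K L]
    (R : L →ₗ[K] L)
    (hR : ∀ x y : L, ⁅R x, R y⁆ = R (⁅R x, y⁆ + ⁅x, R y⁆) - ⁅x, y⁆) :
    (∀ x y : L, rPlus R (rBracket R x y) = ⁅rPlus R x, rPlus R y⁆) ∧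
    (∀ x y : L, rMinus R (rBracket R x y) = ⁅rMinus R x, rMinus R y⁆) ∧
    (∀ x y : L, ⁅rPlus R x, rPlus R y⁆
        = rPlus R (⁅rPlus R x, y⁆ + ⁅x, rPlus R y⁆ - ⁅x, y⁆)) ∧
    (∀ x y : L, ⁅rMinus R x, rMinus R y⁆
        = rMinus R (⁅rMinus R x, y⁆ + ⁅x, rMinus R y⁆ + ⁅x, y⁆)) := by
  refine ⟨fun x y => ?_, fun x y => ?_, fun x y => ?_, fun x y => ?_⟩ <;>
  · simp only [rPlus, rMinus, rBracket, LinearMap.smul_apply, LinearMap.add_apply,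
      LinearMap.sub_apply, LinearMap.id_apply, smul_lie, lie_smul, add_lie, lie_add, sub_lie,
      lie_sub, hR, map_add, map_sub, map_smul]
    module
end

section
/- Let g be a Lie algebra over a field K of characteristic zero and let R : g → g satisfy the modified classical Yang–Baxter equation [Rx,Ry] = R([Rx,y] + [x,Ry]) − [x,y] for all x, y. Set R_− := (1/2)(R − id). Then the bilinear product x ▷ y := [R_− x, y] defines a left post-Lie algebra structure on g: for all x, y, z, (1) x ▷ [y,z] = [x ▷ y, z] + [y, x ▷ z], and (2) [x,y] ▷ z = a_▷(x,y,z) − a_▷(y,x,z), where a_▷(x,y,z) := x ▷ (y ▷ z) − (x ▷ y) ▷ z. -/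
/-- The product `x ▷ y := [R_− x, y]` induced by a classical `r`-matrix. -/
def rTriangleProd {K : Type*} [Field K] {L : Type*} [LieRing L] [LieAlgebra K L]
    (R : L →ₗ[K] L) (x y : L) : L :=
  ⁅rMinus R x, y⁆

/-- The associator of the product `x ▷ y := [R_− x, y]`. -/
def rTriangleAssociator {K : Type*} [Field K] {L : Type*} [LieRing L] [LieAlgebra K L]
    (R : L →ₗ[K] L) (x y z : L) : L :=
  rTriangleProd R x (rTriangleProd R y z) - rTriangleProd R (rTriangleProd R x y) z

/-- **Statement 9.** If `R` satisfies the modified classical Yang–Baxter equation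
`[Rx,Ry] = R([Rx,y] + [x,Ry]) − [x,y]`, then `x ▷ y := [R_− x, y]`, with
`R_− := (1/2)(R − id)`, defines a left post-Lie algebra structure on `g`:
(1) `x ▷ [y,z] = [x ▷ y, z] + [y, x ▷ z]` and
(2) `[x,y] ▷ z = a_▷(x,y,z) − a_▷(y,x,z)` for all `x, y, z`. -/
theorem mcybe_gives_leftPostLie
    (K : Type*) [Field K] [CharZero K]
    (L : Type*) [LieRing L] [LieAlgebra K L]
    (R : L →ₗ[K] L)
    (hR : ∀ x y : L, ⁅R x, R y⁆ = R (⁅R x, y⁆ + ⁅x, R y⁆) - ⁅x, y⁆) :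
    (∀ x y z : L, rTriangleProd R x ⁅y, z⁆
        = ⁅rTriangleProd R x y, z⁆ + ⁅y, rTriangleProd R x z⁆) ∧
    (∀ x y z : L, rTriangleProd R ⁅x, y⁆ z
        = rTriangleAssociator R x y z - rTriangleAssociator R y x z) := by
  refine ⟨fun x y z => leibniz_lie _ _ _, fun x y z => ?_⟩
  have key : ⁅rMinus R x, rMinus R y⁆
      = rMinus R (⁅rMinus R x, y⁆ + ⁅x, rMinus R y⁆ + ⁅x, y⁆) := by
    have h := hR x y
    rw [map_add] at h
    simp only [rMinus, LinearMap.smul_apply, LinearMap.sub_apply, LinearMap.id_apply,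
      smul_lie, lie_smul, sub_lie, lie_sub, map_add, map_sub, map_smul, h]
    module
  unfold rTriangleAssociator rTriangleProd
  have h2 : ⁅rMinus R x, ⁅rMinus R y, z⁆⁆
      = ⁅⁅rMinus R x, rMinus R y⁆, z⁆ + ⁅rMinus R y, ⁅rMinus R x, z⁆⁆ := leibniz_lie _ _ _
  rw [h2, key, ← lie_skew x (rMinus R y)]
  simp only [map_add, map_neg, add_lie, neg_lie]
  abel
end

section
/- Let g be a Lie algebra over a field K of characteristic zero and let R : g → g satisfy the modified classical Yang–Baxter equation [Rx,Ry] = R([Rx,y] + [x,Ry]) − [x,y] for all x, y. Set R_+ := (1/2)(R + id). Then the bilinear product x ◁ y := [R_+ x, y] defines a right post-Lie algebra structure on g: for all x, y, z, (1) x ◁ [y,z] = [x ◁ y, z] + [y, x ◁ z], and (2) [x,y] ◁ z = a_◁(y,x,z) − a_◁(x,y,z), where a_◁(x,y,z) := x ◁ (y ◁ z) − (x ◁ y) ◁ z. -/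
/-- The product `x ◁ y := [R_+ x, y]` induced by a classical `r`-matrix. -/
def rTriangleLeftProd {K : Type*} [Field K] {L : Type*} [LieRing L] [LieAlgebra K L]
    (R : L →ₗ[K] L) (x y : L) : L :=
  ⁅rPlus R x, y⁆

/-- The associator of the product `x ◁ y := [R_+ x, y]`. -/
def rTriangleLeftAssociator {K : Type*} [Field K] {L : Type*} [LieRing L] [LieAlgebra K L]
    (R : L →ₗ[K] L) (x y z : L) : L :=
  rTriangleLeftProd R x (rTriangleLeftProd R y z)
    - rTriangleLeftProd R (rTriangleLeftProd R x y) z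

/-- **Statement 10.** If `R` satisfies the modified classical Yang–Baxter equation
`[Rx,Ry] = R([Rx,y] + [x,Ry]) − [x,y]`, then `x ◁ y := [R_+ x, y]`, with
`R_+ := (1/2)(R + id)`, defines a right post-Lie algebra structure on `g`:
(1) `x ◁ [y,z] = [x ◁ y, z] + [y, x ◁ z]` and
(2) `[x,y] ◁ z = a_◁(y,x,z) − a_◁(x,y,z)` for all `x, y, z`. -/
theorem mcybe_gives_rightPostLie
    (K : Type*) [Field K] [CharZero K]
    (L : Type*) [LieRing L] [LieAlgebra K L]
    (R : L →ₗ[K] L)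
    (hR : ∀ x y : L, ⁅R x, R y⁆ = R (⁅R x, y⁆ + ⁅x, R y⁆) - ⁅x, y⁆) :
    (∀ x y z : L, rTriangleLeftProd R x ⁅y, z⁆
        = ⁅rTriangleLeftProd R x y, z⁆ + ⁅y, rTriangleLeftProd R x z⁆) ∧
    (∀ x y z : L, rTriangleLeftProd R ⁅x, y⁆ z
        = rTriangleLeftAssociator R y x z - rTriangleLeftAssociator R x y z) := by
  have key : ∀ x y : L, ⁅rPlus R x, rPlus R y⁆
      = rPlus R (⁅rPlus R x, y⁆ + ⁅x, rPlus R y⁆ - ⁅x, y⁆) := by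
    intro x y
    have h := hR x y
    have e : ⁅rPlus R x, y⁆ + ⁅x, rPlus R y⁆ - ⁅x, y⁆
        = (1 / 2 : K) • (⁅R x, y⁆ + ⁅x, R y⁆) := by
      simp only [rPlus, LinearMap.smul_apply, LinearMap.add_apply, LinearMap.id_apply,
        smul_lie, lie_smul, add_lie, lie_add]
      module
    rw [e]
    simp only [rPlus, LinearMap.smul_apply, LinearMap.add_apply, LinearMap.id_apply,
      smul_lie, lie_smul, add_lie, lie_add, map_smul, map_add] at h ⊢
    rw [h]
    module
  refine ⟨fun x y z => ?_, fun x y z => ?_⟩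
  · simp only [rTriangleLeftProd]
    exact leibniz_lie _ _ _
  · have h := key x y
    have j := leibniz_lie (rPlus R x) (rPlus R y) z
    have hs : ⁅rPlus R y, x⁆ = -⁅x, rPlus R y⁆ := (lie_skew _ _).symm
    simp only [rTriangleLeftAssociator, rTriangleLeftProd]
    rw [j, h, hs]
    simp only [map_add, map_sub, map_neg, add_lie, sub_lie, neg_lie]
    abel
end
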